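/- arXiv:1512.08602 — 3 statements merged into one kernel-verified Lean document; each statement's English description precedes it below -/
import Mathlib

section
/- There exists an absolute constant C > 0 with the following property. Let d, n be positive integers, p ≥ 2 a real number, and v₁, …, vₙ ∈ ℝ^d; let P be the convex hull of {v₁,…,vₙ}. Suppose u ∈ P satisfies {z : ‖z − u‖_p ≤ r} ⊆ P ⊆ {z : ‖z − u‖_p ≤ 1} for some r > 0, and let ε > 0 satisfy r ≥ 2ε. Then there exists x ∈ ℝ^n with x ≥ 0 coordinatewise, Σᵢ xᵢ = 1, at most C·(p/r²)·log(r/ε) nonzero coordinates, such that ‖Σ_{i ∈ supp(x)} xᵢ vᵢ − u‖_p ≤ ε. -/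
open Finset

/-- The ℓ_p norm of a finite-dimensional real vector, for real `p ≥ 1`. -/
noncomputable def lpNorm {ι : Type*} [Fintype ι] (p : ℝ) (x : ι → ℝ) : ℝ :=
  (∑ j, |x j| ^ p) ^ (1 / p)

lemma aux_hasDerivAt_signed (p : ℝ) (hp : 2 ≤ p) (x : ℝ) :
    HasDerivAt (fun y : ℝ => |y| ^ (p - 2) * y) ((p - 1) * |x| ^ (p - 2)) x := by
  rcases eq_or_lt_of_le hp with h2 | h2
  · subst h2
    simp only [sub_self, Real.rpow_zero, one_mul, mul_one]
    exact (hasDerivAt_id' x).congr_deriv (by norm_num)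
  · rcases lt_trichotomy x 0 with hx | hx | hx
    · have h1 : HasDerivAt (fun y : ℝ => -((-y) ^ (p - 1))) (-(-1 * (p - 1) * (-x) ^ (p - 1 - 1))) x :=
        ((hasDerivAt_neg x).rpow_const (Or.inl (by linarith))).neg
      have h3 : (fun y : ℝ => |y| ^ (p - 2) * y) =ᶠ[nhds x] (fun y : ℝ => -((-y) ^ (p - 1))) := by
        filter_upwards [Iio_mem_nhds hx] with y hy
        have hy' : 0 < -y := by simpa using hy
        rw [abs_of_neg (by simpa using hy), show p - 1 = (p - 2) + 1 by ring, Real.rpow_add_one hy'.ne']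
        ring
      refine (h1.congr_of_eventuallyEq h3).congr_deriv ?_
      rw [abs_of_neg hx, show p - 1 - 1 = p - 2 by ring]; ring
    · subst hx
      rw [hasDerivAt_iff_tendsto_slope]
      have : Filter.Tendsto (fun y : ℝ => |y| ^ (p - 2)) (nhdsWithin 0 {0}ᶜ) (nhds ((p - 1) * |(0:ℝ)| ^ (p - 2))) := by
        have hc : Continuous (fun y : ℝ => |y| ^ (p - 2)) :=
          continuous_abs.rpow_const (fun _ => Or.inr (by linarith))
        have := hc.tendsto 0
        rw [abs_zero, Real.zero_rpow (by linarith)] at *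
        simpa using this.mono_left nhdsWithin_le_nhds
      refine this.congr' ?_
      filter_upwards [self_mem_nhdsWithin] with y hy
      have hy' : y ≠ 0 := hy
      simp only [slope_def_field]
      field_simp
      ring
    · have h1 : HasDerivAt (fun y : ℝ => y ^ (p - 1)) (1 * (p - 1) * x ^ (p - 1 - 1)) x :=
        (hasDerivAt_id x).rpow_const (Or.inl hx.ne')
      have h3 : (fun y : ℝ => |y| ^ (p - 2) * y) =ᶠ[nhds x] (fun y : ℝ => y ^ (p - 1)) := by
        filter_upwards [Ioi_mem_nhds hx] with y hy
        have hy' : 0 < y := hy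
        rw [abs_of_pos hy', show p - 1 = (p - 2) + 1 by ring, Real.rpow_add_one hy'.ne']
      refine (h1.congr_of_eventuallyEq h3).congr_deriv ?_
      rw [abs_of_pos hx, show p - 1 - 1 = p - 2 by ring]; ring

lemma aux_taylor (f f' f'' : ℝ → ℝ) (M : ℝ) (h1 : ∀ t, HasDerivAt f (f' t) t)
    (h2 : ∀ t, HasDerivAt f' (f'' t) t) (hM : ∀ t, f'' t ≤ 2 * M) :
    f 1 ≤ f 0 + f' 0 + M := by
  have g2 : ∀ t, HasDerivAt (fun t => f' t - 2 * M * t) (f'' t - 2 * M * 1) t := fun t =>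
    (h2 t).sub ((hasDerivAt_id t).const_mul (2 * M))
  have g1 : ∀ t, HasDerivAt (fun t => f t - f' 0 * t - M * t ^ 2) (f' t - f' 0 * 1 - M * (2 * t)) t := by
    intro t
    have := ((h1 t).sub ((hasDerivAt_id t).const_mul (f' 0))).sub ((hasDerivAt_pow 2 t).const_mul M)
    exact this.congr_deriv (by simp)
  have a2 : Antitone (fun t => f' t - 2 * M * t) :=
    antitone_of_deriv_nonpos (fun t => (g2 t).differentiableAt)
      (fun t => by rw [(g2 t).deriv]; linarith [hM t])
  have a1 : AntitoneOn (fun t => f t - f' 0 * t - M * t ^ 2) (Set.Ici 0) := by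
    refine antitoneOn_of_deriv_nonpos (convex_Ici 0)
      (fun t _ => (g1 t).continuousAt.continuousWithinAt)
      (fun t _ => (g1 t).differentiableAt.differentiableWithinAt) ?_
    intro t ht
    rw [interior_Ici] at ht
    have := a2 (le_of_lt ht : (0:ℝ) ≤ t)
    simp only at this
    rw [(g1 t).deriv]; linarith
  have := a1 (Set.mem_Ici.2 le_rfl) (Set.mem_Ici.2 zero_le_one) zero_le_one
  simp only at this
  linarith

lemma aux_holder {d : ℕ} (p : ℝ) (hp : 2 ≤ p) (w h : Fin d → ℝ) :
    ∑ j, |w j| ^ (p - 2) * h j ^ 2 ≤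
      (∑ j, |w j| ^ p) ^ (1 - 2 / p) * (∑ j, |h j| ^ p) ^ (2 / p) := by
  rcases eq_or_lt_of_le hp with h2 | h2
  · subst h2; norm_num
  · have hc : (p / (p - 2)).HolderConjugate (p / 2) := by
      rw [Real.holderConjugate_iff]
      have : 0 < p - 2 := by linarith
      constructor
      · rw [lt_div_iff₀ this]; linarith
      · field_simp; ring
    have := Real.inner_le_Lp_mul_Lq Finset.univ (fun j => |w j| ^ (p - 2)) (fun j => h j ^ 2) hc
    have e1 : ∀ j, |(|w j| ^ (p - 2))| ^ (p / (p - 2)) = |w j| ^ p := by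
      intro j
      rw [abs_of_nonneg (by positivity), ← Real.rpow_mul (abs_nonneg _)]
      congr 1; have : p - 2 ≠ 0 := by linarith
      field_simp
    have e2 : ∀ j, |h j ^ 2| ^ (p / 2) = |h j| ^ p := by
      intro j
      rw [abs_pow, ← Real.rpow_natCast, ← Real.rpow_mul (abs_nonneg _)]
      congr 1; push_cast; ring
    simp only [e1, e2] at this
    convert this using 3
    · have : p - 2 ≠ 0 := by linarith
      field_simp
    · field_simp

lemma aux_smooth_delta {d : ℕ} (p : ℝ) (hp : 2 ≤ p) (z h : Fin d → ℝ) (δ : ℝ) (hδ : 0 < δ) :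
    (δ + ∑ j, |z j + h j| ^ p) ^ (2 / p) ≤ (δ + ∑ j, |z j| ^ p) ^ (2 / p)
      + 2 * (δ + ∑ j, |z j| ^ p) ^ (2 / p - 1) * (∑ j, |z j| ^ (p - 2) * z j * h j)
      + (p - 1) * (∑ j, |h j| ^ p) ^ (2 / p) := by
  have hp0 : 0 < p := by linarith
  let S : ℝ → ℝ := fun t => δ + ∑ j, |z j + t * h j| ^ p
  let S1 : ℝ → ℝ := fun t => ∑ j, |z j + t * h j| ^ (p - 2) * (z j + t * h j) * h j
  let S2 : ℝ → ℝ := fun t => ∑ j, |z j + t * h j| ^ (p - 2) * h j ^ 2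
  have hSpos : ∀ t, 0 < S t := fun t => by
    have : 0 ≤ ∑ j, |z j + t * h j| ^ p := Finset.sum_nonneg (fun j _ => by positivity)
    simp only [S]; linarith
  have hl : ∀ j t, HasDerivAt (fun t => z j + t * h j) (h j) t := fun j t => by
    simpa using ((hasDerivAt_id t).mul_const (h j)).const_add (z j)
  have hS : ∀ t, HasDerivAt S (p * S1 t) t := by
    intro t
    have : HasDerivAt (fun t => ∑ j, |z j + t * h j| ^ p)
        (∑ j, p * |z j + t * h j| ^ (p - 2) * (z j + t * h j) * h j) t :=
      HasDerivAt.fun_sum (fun j _ =>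
        HasDerivAt.comp (h₂ := fun x : ℝ => |x| ^ p) t
          (hasDerivAt_abs_rpow (z j + t * h j) (by linarith : 1 < p)) (hl j t))
    refine (this.const_add δ).congr_deriv ?_
    simp only [S1, Finset.mul_sum]
    exact Finset.sum_congr rfl (fun j _ => by ring)
  have hS1 : ∀ t, HasDerivAt S1 ((p - 1) * S2 t) t := by
    intro t
    have : HasDerivAt (fun t => ∑ j, |z j + t * h j| ^ (p - 2) * (z j + t * h j) * h j)
        (∑ j, (p - 1) * |z j + t * h j| ^ (p - 2) * h j * h j) t :=
      HasDerivAt.fun_sum (fun j _ =>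
        (HasDerivAt.comp (h₂ := fun y : ℝ => |y| ^ (p - 2) * y) t (aux_hasDerivAt_signed p hp (z j + t * h j)) (hl j t)).mul_const (h j))
    refine this.congr_deriv ?_
    simp only [S2, Finset.mul_sum]
    exact Finset.sum_congr rfl (fun j _ => by ring)
  have hpw : ∀ q t, HasDerivAt (fun t => S t ^ q) (p * S1 t * q * S t ^ (q - 1)) t := fun q t =>
    (hS t).rpow_const (Or.inl (hSpos t).ne')
  have key := aux_taylor (fun t => S t ^ (2 / p)) (fun t => 2 * (S t ^ (2 / p - 1) * S1 t))
    (fun t => 2 * ((p * S1 t * (2 / p - 1) * S t ^ (2 / p - 1 - 1)) * S1 t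
      + S t ^ (2 / p - 1) * ((p - 1) * S2 t)))
    ((p - 1) * (∑ j, |h j| ^ p) ^ (2 / p)) ?_ ?_ ?_
  · simp only [S, S1, one_mul, zero_mul, add_zero] at key
    linarith
  · intro t
    refine (hpw (2 / p) t).congr_deriv ?_
    field_simp
  · intro t
    exact ((hpw (2 / p - 1) t).mul (hS1 t)).const_mul 2
  · intro t
    have hH := aux_holder p hp (fun j => z j + t * h j) h
    have hq : 2 / p ≤ 1 := by rw [div_le_one hp0]; exact hp
    set T := ∑ j, |z j + t * h j| ^ p with hT
    set H := (∑ j, |h j| ^ p) ^ (2 / p) with hHdef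
    have hH0 : 0 ≤ H := Real.rpow_nonneg (Finset.sum_nonneg (fun j _ => by positivity)) _
    have hT0 : 0 ≤ T := Finset.sum_nonneg (fun j _ => by positivity)
    have hTS : T ^ (1 - 2 / p) ≤ S t ^ (1 - 2 / p) :=
      Real.rpow_le_rpow hT0 (by simp only [S]; linarith) (by linarith)
    have h1 : S t ^ (2 / p - 1) * S2 t ≤ H := by
      have hh : S2 t ≤ S t ^ (1 - 2 / p) * H := hH.trans (mul_le_mul_of_nonneg_right hTS hH0)
      calc S t ^ (2 / p - 1) * S2 t ≤ S t ^ (2 / p - 1) * (S t ^ (1 - 2 / p) * H) :=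
            mul_le_mul_of_nonneg_left hh (Real.rpow_nonneg (hSpos t).le _)
        _ = H := by
            rw [← mul_assoc, ← Real.rpow_add (hSpos t)]; simp
    have h2 : (p * S1 t * (2 / p - 1) * S t ^ (2 / p - 1 - 1)) * S1 t ≤ 0 := by
      have : 0 ≤ p * (S1 t) ^ 2 * S t ^ (2 / p - 1 - 1) :=
        mul_nonneg (by positivity) (Real.rpow_nonneg (hSpos t).le _)
      nlinarith
    have h3 : (p - 1) * (S t ^ (2 / p - 1) * S2 t) ≤ (p - 1) * H :=
      mul_le_mul_of_nonneg_left h1 (by linarith)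
    linarith

lemma aux_smooth {d : ℕ} (p : ℝ) (hp : 2 ≤ p) (z h : Fin d → ℝ) (hz : 0 < ∑ j, |z j| ^ p) :
    (∑ j, |z j + h j| ^ p) ^ (2 / p) ≤ (∑ j, |z j| ^ p) ^ (2 / p)
      + 2 * (∑ j, |z j| ^ p) ^ (2 / p - 1) * (∑ j, |z j| ^ (p - 2) * z j * h j)
      + (p - 1) * (∑ j, |h j| ^ p) ^ (2 / p) := by
  have hp0 : 0 < 2 / p := by positivity
  have t : ∀ (A q : ℝ), (A ≠ 0 ∨ 0 ≤ q) → Filter.Tendsto (fun δ : ℝ => (δ + A) ^ q)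
      (nhdsWithin 0 (Set.Ioi 0)) (nhds (A ^ q)) := by
    intro A q hA
    have : ContinuousAt (fun δ : ℝ => (δ + A) ^ q) 0 :=
      (continuousAt_id.add continuousAt_const).rpow_const (by simpa using hA)
    have := this.tendsto.mono_left (nhdsWithin_le_nhds (s := Set.Ioi 0))
    simpa using this
  refine le_of_tendsto_of_tendsto (t _ _ (Or.inr hp0.le))
    (((t _ _ (Or.inr hp0.le)).add (((t _ (2 / p - 1) (Or.inl hz.ne')).const_mul 2).mul_const _)).add_const _) ?_
  filter_upwards [self_mem_nhdsWithin] with δ hδ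
  exact aux_smooth_delta p hp z h δ hδ

lemma aux_lp_nonneg {d : ℕ} (p : ℝ) (z : Fin d → ℝ) : 0 ≤ lpNorm p z :=
  Real.rpow_nonneg (Finset.sum_nonneg (fun j _ => by positivity)) _

lemma aux_lp_smul {d : ℕ} (p : ℝ) (hp : 2 ≤ p) (c : ℝ) (z : Fin d → ℝ) :
    lpNorm p (fun j => c * z j) = |c| * lpNorm p z := by
  have hp0 : p ≠ 0 := by linarith
  unfold lpNorm
  simp only [abs_mul, Real.mul_rpow (abs_nonneg _) (abs_nonneg _)]
  rw [← Finset.mul_sum, Real.mul_rpow (by positivity)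
    (Finset.sum_nonneg (fun j _ => by positivity)), ← Real.rpow_mul (abs_nonneg _)]
  rw [mul_one_div_cancel hp0, Real.rpow_one]

lemma aux_lp_sq {d : ℕ} (p : ℝ) (z : Fin d → ℝ) :
    lpNorm p z ^ 2 = (∑ j, |z j| ^ p) ^ (2 / p) := by
  unfold lpNorm
  rw [← Real.rpow_natCast, ← Real.rpow_mul (Finset.sum_nonneg (fun j _ => by positivity))]
  congr 1; push_cast; ring

lemma aux_step {d n : ℕ} (p : ℝ) (hp : 2 ≤ p) (v : Fin n → Fin d → ℝ) (u : Fin d → ℝ) (r : ℝ)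
    (hr : 0 < r)
    (hin : {z : Fin d → ℝ | lpNorm p (fun j => z j - u j) ≤ r} ⊆ convexHull ℝ (Set.range v))
    (hout : convexHull ℝ (Set.range v) ⊆ {z : Fin d → ℝ | lpNorm p (fun j => z j - u j) ≤ 1})
    (z : Fin d → ℝ) (hz : 0 < lpNorm p z) (hz1 : lpNorm p z ≤ 1) :
    ∃ i, ∀ γ : ℝ, 0 ≤ γ →
      lpNorm p (fun j => z j + γ * (v i j - u j - z j)) ^ 2 ≤
        lpNorm p z ^ 2 - 2 * γ * (r * lpNorm p z + lpNorm p z ^ 2) + 4 * p * γ ^ 2 := by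
  have hp0 : 0 < p := by linarith
  set N := lpNorm p z with hN
  set S := ∑ j, |z j| ^ p with hS
  have hS0 : 0 ≤ S := Finset.sum_nonneg (fun j _ => by positivity)
  have hSpos : 0 < S := by
    rcases hS0.lt_or_eq with h | h
    · exact h
    · exfalso
      have : N = S ^ (1 / p) := rfl
      rw [this, ← h, Real.zero_rpow (by positivity)] at hz
      exact lt_irrefl _ hz
  have hN2 : N ^ 2 = S ^ (2 / p) := aux_lp_sq p z
  have hGz : ∑ j, |z j| ^ (p - 2) * z j * z j = S := by
    refine Finset.sum_congr rfl (fun j _ => ?_)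
    rw [mul_assoc, ← abs_mul_abs_self (z j), ← pow_two]
    by_cases h : z j = 0
    · rw [h, abs_zero, Real.zero_rpow hp0.ne']; simp
    · rw [← Real.rpow_natCast, ← Real.rpow_add (abs_pos.2 h)]; congr 1; push_cast; ring
  have hc : (fun j => u j - r / N * z j) ∈ convexHull ℝ (Set.range v) := by
    apply hin
    have e : (fun j => (u j - r / N * z j) - u j) = fun j => (-(r / N)) * z j := by
      funext j; ring
    simp only [Set.mem_ofPred_eq]
    rw [e, aux_lp_smul p hp, abs_neg, abs_of_pos (by positivity), ← hN]
    exact (div_mul_cancel₀ r hz.ne').le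
  obtain ⟨i, hi⟩ : ∃ i, ∑ j, |z j| ^ (p - 2) * z j * v i j ≤
      ∑ j, |z j| ^ (p - 2) * z j * (u j - r / N * z j) := by
    by_contra! hcon
    have hlin : IsLinearMap ℝ (fun y : Fin d → ℝ => ∑ j, |z j| ^ (p - 2) * z j * y j) := by
      constructor
      · intro a b; simp only [Pi.add_apply, mul_add, Finset.sum_add_distrib]
      · intro a b; simp only [Pi.smul_apply, smul_eq_mul, Finset.mul_sum]
        exact Finset.sum_congr rfl (fun j _ => by ring)
    have hsub := convexHull_min (s := Set.range v)
      (t := {y | ∑ j, |z j| ^ (p - 2) * z j * (u j - r / N * z j) < ∑ j, |z j| ^ (p - 2) * z j * y j})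
      (by rintro _ ⟨i, rfl⟩; exact hcon i)
      (convex_halfSpace_gt hlin _)
    have hlt := hsub hc
    simp only [Set.mem_ofPred_eq, lt_self_iff_false] at hlt
  refine ⟨i, fun γ hγ => ?_⟩
  have hvi : lpNorm p (fun j => v i j - u j) ≤ 1 := hout (subset_convexHull ℝ _ ⟨i, rfl⟩)
  have hdist : lpNorm p (fun j => v i j - u j - z j) ≤ 2 := by
    have := Real.Lp_add_le Finset.univ (fun j => v i j - u j) (fun j => (-1) * z j)
      (by linarith : 1 ≤ p)
    have h2 : lpNorm p (fun j => (-1) * z j) = N := by rw [aux_lp_smul p hp]; simp [hN]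
    have e : (fun j => v i j - u j - z j) = fun j => (v i j - u j) + (-1) * z j := by
      funext j; ring
    rw [e]
    refine (show _ ≤ lpNorm p (fun j => v i j - u j) + lpNorm p (fun j => (-1) * z j) from this).trans ?_
    linarith
  have hsm := aux_smooth p hp z (fun j => γ * (v i j - u j - z j)) hSpos
  rw [← aux_lp_sq, ← aux_lp_sq p (fun j => γ * (v i j - u j - z j)), ← hS, ← hN2,
    aux_lp_smul p hp, abs_of_nonneg hγ] at hsm
  have hGi : ∑ j, |z j| ^ (p - 2) * z j * (γ * (v i j - u j - z j)) ≤ γ * (-(r / N) * S - S) := by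
    have e1 : ∑ j, |z j| ^ (p - 2) * z j * (γ * (v i j - u j - z j)) =
        γ * (∑ j, |z j| ^ (p - 2) * z j * v i j - ∑ j, |z j| ^ (p - 2) * z j * u j
          - ∑ j, |z j| ^ (p - 2) * z j * z j) := by
      rw [← Finset.sum_sub_distrib, ← Finset.sum_sub_distrib, Finset.mul_sum]
      exact Finset.sum_congr rfl (fun j _ => by ring)
    have e2 : ∑ j, |z j| ^ (p - 2) * z j * (u j - r / N * z j) =
        ∑ j, |z j| ^ (p - 2) * z j * u j - r / N * ∑ j, |z j| ^ (p - 2) * z j * z j := by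
      rw [Finset.mul_sum, ← Finset.sum_sub_distrib]
      exact Finset.sum_congr rfl (fun j _ => by ring)
    rw [e1, hGz]
    rw [e2, hGz] at hi
    exact mul_le_mul_of_nonneg_left (by linarith) hγ
  have hA : S ^ (2 / p - 1) * S = N ^ 2 := by
    rw [hN2, ← Real.rpow_add_one hSpos.ne']; congr 1; ring
  have h1 := mul_le_mul_of_nonneg_left hGi
    (mul_nonneg zero_le_two (Real.rpow_nonneg hS0 (2 / p - 1)))
  have h2 : 2 * S ^ (2 / p - 1) * (γ * (-(r / N) * S - S)) = - 2 * γ * (r * N + N ^ 2) := by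
    have : 2 * S ^ (2 / p - 1) * (γ * (-(r / N) * S - S))
        = - 2 * γ * (r / N * (S ^ (2 / p - 1) * S) + S ^ (2 / p - 1) * S) := by ring
    rw [this, hA]; field_simp
  have h3 : (γ * lpNorm p (fun j => v i j - u j - z j)) ^ 2 ≤ 4 * γ ^ 2 := by
    have h0 := aux_lp_nonneg p (fun j => v i j - u j - z j)
    rw [mul_pow]
    nlinarith [sq_nonneg γ, mul_le_mul hdist hdist h0 zero_le_two]
  have h4 : (p - 1) * (γ * lpNorm p (fun j => v i j - u j - z j)) ^ 2 ≤ (p - 1) * (4 * γ ^ 2) :=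
    mul_le_mul_of_nonneg_left h3 (by linarith)
  nlinarith [sq_nonneg γ]

/-- `auxReach p v u k a`: a simplex point with support at most `k` reaches squared distance `a`. -/
def auxReach {d n : ℕ} (p : ℝ) (v : Fin n → Fin d → ℝ) (u : Fin d → ℝ) (k : ℕ) (a : ℝ) : Prop :=
  ∃ x : Fin n → ℝ, (∀ i, 0 ≤ x i) ∧ (∑ i, x i = 1) ∧
    (Finset.univ.filter (fun i => x i ≠ 0)).card ≤ k ∧
    lpNorm p (fun j => (∑ i, x i * v i j) - u j) ^ 2 ≤ a

lemma aux_reach_step {d n : ℕ} (p : ℝ) (hp : 2 ≤ p) (v : Fin n → Fin d → ℝ) (u : Fin d → ℝ)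
    (r : ℝ) (hr : 0 < r) (hr1 : r ≤ 1)
    (hin : {z : Fin d → ℝ | lpNorm p (fun j => z j - u j) ≤ r} ⊆ convexHull ℝ (Set.range v))
    (hout : convexHull ℝ (Set.range v) ⊆ {z : Fin d → ℝ | lpNorm p (fun j => z j - u j) ≤ 1})
    (k : ℕ) (a : ℝ) (h : auxReach p v u k a) :
    auxReach p v u (k + 1) (a * (1 - r ^ 2 / (4 * p))) ∧
      (a ≤ p → auxReach p v u (k + 1) (a - a ^ 2 / (4 * p))) := by
  obtain ⟨x, hx0, hx1, hxk, hxa⟩ := h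
  have hp0 : 0 < p := by linarith
  set z : Fin d → ℝ := fun j => (∑ i, x i * v i j) - u j with hz
  have hN1 : lpNorm p z ≤ 1 := by
    have hmem : (∑ i, x i • v i) ∈ convexHull ℝ (Set.range v) :=
      (convex_convexHull ℝ _).sum_mem (fun i _ => hx0 i) hx1
        (fun i _ => subset_convexHull ℝ _ ⟨i, rfl⟩)
    have := hout hmem
    simpa [Finset.sum_apply, hz] using this
  have hN0 := aux_lp_nonneg p z
  -- the generic move
  have move : ∀ i : Fin n, ∀ γ : ℝ, 0 ≤ γ → γ ≤ 1 → ∀ b,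
      lpNorm p (fun j => z j + γ * (v i j - u j - z j)) ^ 2 ≤ b → auxReach p v u (k + 1) b := by
    intro i γ hγ0 hγ1 b hb
    refine ⟨fun l => (1 - γ) * x l + γ * (if l = i then 1 else 0), ?_, ?_, ?_, ?_⟩
    · intro l
      have := hx0 l
      have : 0 ≤ 1 - γ := by linarith
      beta_reduce
      split_ifs <;> positivity
    · rw [Finset.sum_add_distrib, ← Finset.mul_sum, ← Finset.mul_sum, hx1]; simp
    · refine le_trans (Finset.card_le_card (t := insert i (Finset.univ.filter (fun i => x i ≠ 0))) ?_)
        ((Finset.card_insert_le _ _).trans (by omega))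
      intro l hl
      simp only [Finset.mem_filter, Finset.mem_univ, true_and, Finset.mem_insert] at hl ⊢
      by_contra! hcon
      apply hl
      simp [hcon.1, hcon.2]
    · convert hb using 3
      funext j
      have : ∑ l, ((1 - γ) * x l + γ * (if l = i then 1 else 0)) * v l j
          = (1 - γ) * ∑ l, x l * v l j + γ * v i j := by
        simp only [add_mul, Finset.sum_add_distrib, Finset.mul_sum]
        congr 1
        · exact Finset.sum_congr rfl (fun l _ => by ring)
        · simp
      rw [this]; simp only [hz]; ring
  have stay : ∀ b, lpNorm p z ^ 2 ≤ b → auxReach p v u (k + 1) b := fun b hb =>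
    ⟨x, hx0, hx1, hxk.trans (Nat.le_succ _), hb⟩
  have ha0 : 0 ≤ a := le_trans (sq_nonneg _) hxa
  have hq : 0 ≤ 1 - r ^ 2 / (4 * p) := by
    rw [sub_nonneg, div_le_one (by positivity)]; nlinarith
  rcases hN0.lt_or_eq with hNpos | hNz
  · obtain ⟨i, hi⟩ := aux_step p hp v u r hr hin hout z hNpos hN1
    set N := lpNorm p z with hN
    constructor
    · refine move i (r * N / (4 * p)) (by positivity) ?_ _ ((hi _ (by positivity)).trans ?_)
      · rw [div_le_one (by positivity)]; nlinarith
      · refine le_trans ?_ (mul_le_mul_of_nonneg_right hxa hq)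
        have e : N ^ 2 * (1 - r ^ 2 / (4 * p)) - (N ^ 2 - 2 * (r * N / (4 * p)) * (r * N + N ^ 2)
          + 4 * p * (r * N / (4 * p)) ^ 2) = 2 * (r * N / (4 * p)) * N ^ 2 := by
          field_simp; ring
        have : 0 ≤ 2 * (r * N / (4 * p)) * N ^ 2 := by positivity
        linarith
    · intro hap
      refine move i (N ^ 2 / (4 * p)) (by positivity) ?_ _ ((hi _ (by positivity)).trans ?_)
      · rw [div_le_one (by positivity)]; nlinarith
      · have e : N ^ 2 - (N ^ 2) ^ 2 / (4 * p) - (N ^ 2 - 2 * (N ^ 2 / (4 * p)) * (r * N + N ^ 2)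
          + 4 * p * (N ^ 2 / (4 * p)) ^ 2) = 2 * (N ^ 2 / (4 * p)) * (r * N) := by
          field_simp; ring
        have h1 : 0 ≤ 2 * (N ^ 2 / (4 * p)) * (r * N) := by positivity
        have e2 : a - a ^ 2 / (4 * p) - (N ^ 2 - (N ^ 2) ^ 2 / (4 * p)) =
          (a - N ^ 2) * (4 * p - a - N ^ 2) / (4 * p) := by field_simp; ring
        have h2 : 0 ≤ (a - N ^ 2) * (4 * p - a - N ^ 2) / (4 * p) :=
          div_nonneg (mul_nonneg (by linarith) (by linarith)) (by positivity)
        linarith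
  · rw [← hNz] at stay
    constructor
    · exact stay _ (by have := mul_nonneg ha0 hq; simpa using this)
    · intro hap
      refine stay _ ?_
      have : a ^ 2 / (4 * p) ≤ a := by rw [div_le_iff₀ (by positivity)]; nlinarith
      simp only [ne_eq, OfNat.ofNat_ne_zero, not_false_eq_true, zero_pow]; linarith

lemma aux_reach_start {d n : ℕ} (hn : 0 < n) (p : ℝ) (v : Fin n → Fin d → ℝ) (u : Fin d → ℝ)
    (hout : convexHull ℝ (Set.range v) ⊆ {z : Fin d → ℝ | lpNorm p (fun j => z j - u j) ≤ 1}) :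
    auxReach p v u 1 1 := by
  let i : Fin n := ⟨0, hn⟩
  refine ⟨fun l => if l = i then 1 else 0, ?_, ?_, ?_, ?_⟩
  · intro l; beta_reduce; split_ifs <;> norm_num
  · simp
  · refine (Finset.card_le_card (t := {i}) ?_).trans (by simp)
    intro l hl
    simp only [Finset.mem_filter, Finset.mem_univ, true_and, Finset.mem_singleton] at hl ⊢
    by_contra hcon
    simp [hcon] at hl
  · have h1 : lpNorm p (fun j => v i j - u j) ≤ 1 := hout (subset_convexHull ℝ _ ⟨i, rfl⟩)
    have h0 := aux_lp_nonneg p (fun j => v i j - u j)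
    have e : (fun j => (∑ l, (if l = i then (1:ℝ) else 0) * v l j) - u j)
        = fun j => v i j - u j := by funext j; simp
    rw [e]; nlinarith

lemma aux_r_le_one {d n : ℕ} (hd : 0 < d) (p : ℝ) (hp : 2 ≤ p) (v : Fin n → Fin d → ℝ)
    (u : Fin d → ℝ) (r : ℝ) (hr : 0 < r)
    (hin : {z : Fin d → ℝ | lpNorm p (fun j => z j - u j) ≤ r} ⊆ convexHull ℝ (Set.range v))
    (hout : convexHull ℝ (Set.range v) ⊆ {z : Fin d → ℝ | lpNorm p (fun j => z j - u j) ≤ 1}) :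
    r ≤ 1 := by
  have hp0 : p ≠ 0 := by linarith
  let j0 : Fin d := ⟨0, hd⟩
  have e1 : lpNorm p (fun j => if j = j0 then (1:ℝ) else 0) = 1 := by
    unfold lpNorm
    have : ∀ j : Fin d, |if j = j0 then (1:ℝ) else 0| ^ p = if j = j0 then 1 else 0 := by
      intro j; split_ifs <;> simp [hp0]
    simp [this]
  have e2 : lpNorm p (fun j => (u j + r * if j = j0 then (1:ℝ) else 0) - u j) = r := by
    have : (fun j => (u j + r * if j = j0 then (1:ℝ) else 0) - u j)
        = fun j => r * if j = j0 then (1:ℝ) else 0 := by funext j; ring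
    rw [this, aux_lp_smul p hp, e1, abs_of_pos hr, mul_one]
  have := hout (hin (show _ ∈ {z : Fin d → ℝ | lpNorm p (fun j => z j - u j) ≤ r} from e2.le))
  simp only [Set.mem_ofPred_eq] at this
  linarith

/-- **Corollary to Theorem 3.5 of the paper**: if `u ∈ P = conv{v₁,…,vₙ}` satisfies
`B_p(u,r) ⊆ P ⊆ B_p(u,1)` and `r ≥ 2ε`, then there exists a point of the unit simplex
supported on `O((p/r²)·log(r/ε))` coordinates whose combination of the `vᵢ`
is `ε`-close to `u` in ℓ_p norm. -/
theorem approx_cara_centered :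
    ∃ C : ℝ, 0 < C ∧
      ∀ (d n : ℕ), 0 < d → 0 < n →
      ∀ (p : ℝ), 2 ≤ p →
      ∀ (v : Fin n → Fin d → ℝ) (u : Fin d → ℝ) (r : ℝ), 0 < r →
      u ∈ convexHull ℝ (Set.range v) →
      {z : Fin d → ℝ | lpNorm p (fun j => z j - u j) ≤ r} ⊆ convexHull ℝ (Set.range v) →
      convexHull ℝ (Set.range v) ⊆ {z : Fin d → ℝ | lpNorm p (fun j => z j - u j) ≤ 1} →
      ∀ (ε : ℝ), 0 < ε → 2 * ε ≤ r →
      ∃ x : Fin n → ℝ, (∀ i, 0 ≤ x i) ∧ (∑ i, x i = 1) ∧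
        (((Finset.univ.filter (fun i => x i ≠ 0)).card : ℝ) ≤
          C * (p / r ^ 2) * Real.log (r / ε)) ∧
        lpNorm p (fun j => (∑ i, x i * v i j) - u j) ≤ ε := by
  refine ⟨16, by norm_num, ?_⟩
  intro d n hd hn p hp v u r hr _ hin hout ε hε hεr
  have hp0 : 0 < p := by linarith
  have hr1 := aux_r_le_one hd p hp v u r hr hin hout
  have step := aux_reach_step p hp v u r hr hr1 hin hout
  have phase1 : ∀ k : ℕ, auxReach p v u (k + 1) (4 * p / (k + 4)) := by
    intro k
    induction k with
    | zero =>
      obtain ⟨x, h1, h2, h3, h4⟩ := aux_reach_start hn p v u hout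
      refine ⟨x, h1, h2, by simpa using h3, h4.trans ?_⟩
      simp only [Nat.cast_zero, zero_add]; linarith
    | succ k ih =>
      have hk : (0:ℝ) ≤ k := Nat.cast_nonneg k
      obtain ⟨x, h1, h2, h3, h4⟩ := (step _ _ ih).2 (by
        rw [div_le_iff₀ (by positivity)]; nlinarith)
      refine ⟨x, h1, h2, h3, h4.trans ?_⟩
      push_cast
      have : 4 * p / (k + 1 + 4) - (4 * p / (k + 4) - (4 * p / (k + 4)) ^ 2 / (4 * p))
        = 4 * p / ((k + 4) ^ 2 * (k + 1 + 4)) := by field_simp; ring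
      have h0 : 0 ≤ 4 * p / (((k:ℝ) + 4) ^ 2 * (k + 1 + 4)) := by positivity
      linarith
  set k1 := ⌈4 * p / r ^ 2⌉₊ with hk1
  have hk1l : 4 * p / r ^ 2 ≤ k1 := Nat.le_ceil _
  have hk1u : (k1 : ℝ) < 4 * p / r ^ 2 + 1 := Nat.ceil_lt_add_one (by positivity)
  have phase2 : ∀ k : ℕ, auxReach p v u (k1 + 1 + k) (r ^ 2 * (1 - r ^ 2 / (4 * p)) ^ k) := by
    intro k
    induction k with
    | zero =>
      obtain ⟨x, h1, h2, h3, h4⟩ := phase1 k1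
      refine ⟨x, h1, h2, h3, h4.trans ?_⟩
      rw [pow_zero, mul_one, div_le_iff₀ (by positivity)]
      rw [div_le_iff₀ (by positivity)] at hk1l
      nlinarith [sq_nonneg r]
    | succ k ih =>
      have := (step _ _ ih).1
      rw [pow_succ _ k, ← mul_assoc]; exact this
  set L := Real.log (r / ε) with hL
  have hL2 : 0.69 ≤ L := by
    have h1 : Real.log 2 ≤ L := Real.log_le_log (by norm_num) (by rw [le_div_iff₀ hε]; exact hεr)
    linarith [Real.log_two_gt_d9]
  set k2 := ⌈8 * p / r ^ 2 * L⌉₊ with hk2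
  have hk2l : 8 * p / r ^ 2 * L ≤ k2 := Nat.le_ceil _
  have hk2u : (k2 : ℝ) < 8 * p / r ^ 2 * L + 1 := Nat.ceil_lt_add_one (by positivity)
  obtain ⟨x, h1, h2, h3, h4⟩ := phase2 k2
  refine ⟨x, h1, h2, ?_, ?_⟩
  · have h3' : ((Finset.univ.filter (fun i => x i ≠ 0)).card : ℝ) ≤ k1 + 1 + k2 := by
      exact_mod_cast h3
    have hpr : 2 ≤ p / r ^ 2 := by
      rw [le_div_iff₀ (by positivity)]; nlinarith
    have e1 : 4 * p / r ^ 2 = 4 * (p / r ^ 2) := by ring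
    have e2 : 8 * p / r ^ 2 * L = 8 * (p / r ^ 2) * L := by ring
    rw [e1] at hk1u
    rw [e2] at hk2u
    nlinarith
  · have hq : 0 ≤ 1 - r ^ 2 / (4 * p) := by
      rw [sub_nonneg, div_le_one (by positivity)]; nlinarith
    have hexp : (1 - r ^ 2 / (4 * p)) ^ k2 ≤ (ε / r) ^ 2 := by
      calc (1 - r ^ 2 / (4 * p)) ^ k2 ≤ (Real.exp (-(r ^ 2 / (4 * p)))) ^ k2 :=
            pow_le_pow_left₀ hq (by linarith [Real.add_one_le_exp (-(r ^ 2 / (4 * p)))]) _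
        _ = Real.exp (k2 * (-(r ^ 2 / (4 * p)))) := by rw [Real.exp_nat_mul]
        _ ≤ Real.exp ((2 : ℕ) * (-L)) := by
            apply Real.exp_le_exp.2
            have : r ^ 2 / (4 * p) * (8 * p / r ^ 2 * L) ≤ r ^ 2 / (4 * p) * k2 :=
              mul_le_mul_of_nonneg_left hk2l (by positivity)
            have e : r ^ 2 / (4 * p) * (8 * p / r ^ 2 * L) = 2 * L := by field_simp; ring
            push_cast
            linarith
        _ = (ε / r) ^ 2 := by
            rw [Real.exp_nat_mul, Real.exp_neg, hL, Real.exp_log (by positivity), inv_div]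
    refine abs_le_of_sq_le_sq' ?_ hε.le |>.2
    refine h4.trans ?_
    calc r ^ 2 * (1 - r ^ 2 / (4 * p)) ^ k2 ≤ r ^ 2 * (ε / r) ^ 2 :=
          mul_le_mul_of_nonneg_left hexp (by positivity)
      _ = ε ^ 2 := by field_simp
end

section
/- There exists a constant K > 0 such that for every real p ≥ 2 and every ε with 0 < ε ≤ 1/2, there exists n₀ such that for all n ≥ n₀ the following holds: there is an n×n real matrix V whose every column has ℓ_p norm exactly 1, such that, setting u = V·(1/n, …, 1/n)ᵀ (so u is a convex combination of the columns of V), every vector x̃ in the unit simplex Δₙ with at most K·p/ε² nonzero coordinates satisfies ‖V x̃ − u‖_p > ε. -/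
open Finset Matrix

/-- the sign of a Boolean -/
noncomputable def sg (b : Bool) : ℝ := if b then 1 else -1

lemma abs_sg (b : Bool) : |sg b| = 1 := by cases b <;> simp [sg]

lemma riesz_nonneg {a : ℝ} (h0 : 0 ≤ a) (h1 : a ≤ 1) (b : Bool) : 0 ≤ 1 + a * sg b := by
  cases b <;> simp [sg] <;> linarith

lemma riesz_sum {m : ℕ} (a : Fin m → ℝ) (l : Fin m) :
    ∑ s : Fin m → Bool, sg (s l) * ∏ j, (1 + a j * sg (s j)) = 2 ^ m * a l := by
  have h1 : ∀ s : Fin m → Bool, sg (s l) * ∏ j, (1 + a j * sg (s j)) =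
      ∏ j, ((if j = l then sg (s j) else 1) * (1 + a j * sg (s j))) := by
    intro s
    rw [Finset.prod_mul_distrib]
    simp
  simp_rw [h1]
  have h2 := (Fintype.prod_sum (fun (j : Fin m) (b : Bool) =>
    ((if j = l then sg b else 1) * (1 + a j * sg b))))
  rw [← h2]
  have h3 : ∀ j : Fin m, ∑ b : Bool, ((if j = l then sg b else 1) * (1 + a j * sg b)) =
      2 * (if j = l then a j else 1) := by
    intro j
    by_cases h : j = l <;> simp [h, sg] <;> ring
  simp_rw [h3]
  rw [Finset.prod_mul_distrib]
  simp

lemma two_point {a r : ℝ} (h0 : 0 ≤ a) (h1 : a ≤ 1) (r0 : 0 ≤ r) (r1 : r ≤ 1) :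
    (1 + a) ^ (r + 1) + (1 - a) ^ (r + 1) ≤ 2 * Real.exp (r * a ^ 2) := by
  have e1 : (1 + a) ^ r ≤ 1 + r * a :=
    rpow_one_add_le_one_add_mul_self (by linarith) r0 r1
  have e2 : (1 + -a) ^ r ≤ 1 + r * -a :=
    rpow_one_add_le_one_add_mul_self (by linarith) r0 r1
  rw [← sub_eq_add_neg] at e2
  rw [Real.rpow_add_one' (by linarith) (by linarith), Real.rpow_add_one' (by linarith) (by linarith)]
  have e3 := Real.add_one_le_exp (r * a ^ 2)
  have e4 := mul_le_mul_of_nonneg_right e1 (show 0 ≤ 1 + a by linarith)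
  have e5 := mul_le_mul_of_nonneg_right e2 (show 0 ≤ 1 - a by linarith)
  nlinarith

lemma core {m : ℕ} (a : Fin m → ℝ) (h0 : ∀ j, 0 ≤ a j) (h1 : ∀ j, a j ≤ 1)
    (W : (Fin m → Bool) → ℝ) {p : ℝ} (hp : 2 ≤ p) :
    ∑ s, W s * ∏ j, (1 + a j * sg (s j)) ≤
      (∑ s, |W s| ^ p) ^ (1 / p) *
        (((2 : ℝ) ^ m) ^ (1 - 1 / p) * Real.exp ((∑ j, a j ^ 2) / p)) := by
  set r : ℝ := 1 / (p - 1) with hr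
  have r0 : 0 ≤ r := by apply one_div_nonneg.2; linarith
  have r1 : r ≤ 1 := by rw [hr, div_le_one (by linarith)]; linarith
  have hq : r + 1 = p / (p - 1) := by
    have : p - 1 ≠ 0 := by linarith
    rw [hr]; field_simp; ring
  have hpq : p.HolderConjugate (r + 1) := by
    rw [hq]; exact Real.HolderConjugate.conjExponent (by linarith)
  have hqi : 1 / (r + 1) = 1 - 1 / p := by
    have : p - 1 ≠ 0 := by linarith
    have : p ≠ 0 := by linarith
    rw [hq]; field_simp
  refine (Real.inner_le_Lp_mul_Lq _ W _ hpq).trans ?_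
  apply mul_le_mul_of_nonneg_left _ (by positivity)
  have hb : ∑ s : Fin m → Bool, |∏ j, (1 + a j * sg (s j))| ^ (r + 1) ≤
      2 ^ m * Real.exp (r * ∑ j, a j ^ 2) := by
    have e1 : ∀ s : Fin m → Bool, |∏ j, (1 + a j * sg (s j))| ^ (r + 1) =
        ∏ j, (1 + a j * sg (s j)) ^ (r + 1) := by
      intro s
      have hn := fun j => riesz_nonneg (h0 j) (h1 j) (s j)
      rw [abs_of_nonneg (Finset.prod_nonneg fun j _ => hn j),
        Real.finsetProd_rpow _ _ (fun j _ => hn j)]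
    simp_rw [e1]
    have h2 := (Fintype.prod_sum (fun (j : Fin m) (b : Bool) => (1 + a j * sg b) ^ (r + 1)))
    rw [← h2, Finset.mul_sum, Real.exp_sum]
    have : (2 : ℝ) ^ m = ∏ _j : Fin m, (2 : ℝ) := by simp
    rw [this, ← Finset.prod_mul_distrib]
    apply Finset.prod_le_prod
    · intro j _
      exact Finset.sum_nonneg fun b _ => Real.rpow_nonneg (riesz_nonneg (h0 j) (h1 j) b) _
    · intro j _
      have := two_point (h0 j) (h1 j) r0 r1
      simpa [sg, ← sub_eq_add_neg] using this
  have h3 := Real.rpow_le_rpow (by positivity) hb (show 0 ≤ 1 / (r + 1) by positivity)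
  refine h3.trans (le_of_eq ?_)
  rw [Real.mul_rpow (by positivity) (by positivity), hqi, ← Real.exp_mul]
  congr 2
  have : p - 1 ≠ 0 := by linarith
  have : p ≠ 0 := by linarith
  rw [hr]; field_simp

lemma fibre {n m : ℕ} (hm : 0 < m) (l : Fin m) :
    (Finset.univ.filter (fun i : Fin n => (⟨i.1 % m, Nat.mod_lt _ hm⟩ : Fin m) = l)).card
      ≤ n / m + 1 := by
  rw [← Finset.card_range (n / m + 1)]
  apply Finset.card_le_card_of_injOn (fun i => i.1 / m)
  · intro i _
    simp only [Finset.coe_range, Set.mem_Iio]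
    exact Nat.lt_succ_of_le (Nat.div_le_div_right i.2.le)
  · intro i hi j hj hij
    simp only [Finset.coe_filter, Finset.mem_univ, true_and, Set.mem_ofPred_eq] at hi hj
    have h := congrArg Fin.val (hi.trans hj.symm)
    simp only at h hij
    ext
    rw [← Nat.div_add_mod i.1 m, ← Nat.div_add_mod j.1 m, hij, h]

/-- **Tight `Ω(p/ε²)` lower bound for approximate Carathéodory**
(Theorem 4.1 / 4.9 of the paper): there is a constant `K > 0` such that for all `p ≥ 2`
and `0 < ε ≤ 1/2` and all sufficiently large `n`, some `n×n` matrix `V` with unit ℓ_p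
norm columns and `u = V·𝟙/n` has the property that every point of the simplex with at
most `K·p/ε²` nonzero coordinates maps at ℓ_p distance greater than `ε` from `u`. -/
theorem cara_lower_bound :
    ∃ K : ℝ, 0 < K ∧
      ∀ (p : ℝ), 2 ≤ p → ∀ (ε : ℝ), 0 < ε → ε ≤ 1 / 2 →
      ∃ n₀ : ℕ, ∀ n : ℕ, n₀ ≤ n →
      ∃ V : Matrix (Fin n) (Fin n) ℝ,
        (∀ i, lpNorm p (fun j => V j i) = 1) ∧
        ∀ x : Fin n → ℝ, (∀ i, 0 ≤ x i) → (∑ i, x i = 1) →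
          (((Finset.univ.filter (fun i => x i ≠ 0)).card : ℝ) ≤ K * p / ε ^ 2) →
          ε < lpNorm p (fun i => V.mulVec x i - V.mulVec (fun _ => 1 / (n : ℝ)) i) := by
  refine ⟨1 / 16, by norm_num, ?_⟩
  intro p hp ε hε hε2
  have hp0 : 0 < p := by linarith
  obtain ⟨M, hM⟩ : ∃ M : ℕ, 1 / 16 * p / ε ^ 2 ≤ M := exists_nat_ge _
  set m : ℕ := 8 * (M + 1) with hm
  have hm0 : 0 < m := by omega
  refine ⟨2 ^ m, ?_⟩
  intro n hn
  have hmn : m ≤ n := (Nat.lt_two_pow_self).le.trans hn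
  have hn0 : 0 < n := by omega
  have hnR : (0 : ℝ) < n := by exact_mod_cast hn0
  obtain ⟨e⟩ : Nonempty ((Fin m → Bool) ↪ Fin n) := by
    apply Function.Embedding.nonempty_of_card_le
    simpa using hn
  let c : Fin n → Fin m := fun i => ⟨i.1 % m, Nat.mod_lt _ hm0⟩
  set N : ℝ := (2 : ℝ) ^ m with hN
  have hN0 : 0 < N := by positivity
  set t : ℝ := N ^ (-(1 / p)) with ht
  have ht0 : 0 < t := by positivity
  have htp : t ^ p = N⁻¹ := by
    rw [ht, ← Real.rpow_mul hN0.le, ← Real.rpow_neg_one]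
    congr 1
    field_simp
  let V : Matrix (Fin n) (Fin n) ℝ := fun j i =>
    Function.extend e (fun s => sg (s (c i)) * t) 0 j
  have hV1 : ∀ s i, V (e s) i = sg (s (c i)) * t := fun s i => e.injective.extend_apply _ _ _
  have hV0 : ∀ j, j ∉ Set.range e → ∀ i, V j i = 0 := fun j hj i =>
    Function.extend_apply' _ _ _ (by simpa using hj)
  refine ⟨V, ?_, ?_⟩
  · intro i
    have h1 : ∑ j, |V j i| ^ p = ∑ _s : Fin m → Bool, N⁻¹ := by
      symm
      apply Fintype.sum_of_injective e e.injective
      · intro j hj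
        rw [hV0 j hj, abs_zero, Real.zero_rpow hp0.ne']
      · intro s
        rw [hV1, abs_mul, abs_sg, one_mul, abs_of_pos ht0, htp]
    unfold lpNorm
    rw [h1]
    have : N * N⁻¹ = 1 := mul_inv_cancel₀ hN0.ne'
    simp [← hN, this]
  · intro x hx hx1 hk
    set S := (Finset.univ.filter (fun i => x i ≠ 0)) with hS
    set S' := S.image c with hS'
    have hkM : S'.card ≤ M := by
      have h1 : S'.card ≤ S.card := Finset.card_image_le
      have h2 : (S.card : ℝ) ≤ M := hk.trans hM
      exact h1.trans (by exact_mod_cast h2)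
    have hkK : (S'.card : ℝ) ≤ 1 / 16 * p / ε ^ 2 := by
      have h1 : S'.card ≤ S.card := Finset.card_image_le
      have h1 : (S'.card : ℝ) ≤ S.card := by exact_mod_cast h1
      exact h1.trans hk
    let a : Fin m → ℝ := fun l => if l ∈ S' then 2 * ε else 0
    let W : (Fin m → Bool) → ℝ := fun s => ∑ i, t * ((x i - 1 / n) * sg (s (c i)))
    have hL : lpNorm p (fun i => V.mulVec x i - V.mulVec (fun _ => 1 / (n : ℝ)) i) =
        (∑ s, |W s| ^ p) ^ (1 / p) := by
      unfold lpNorm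
      congr 1
      symm
      apply Fintype.sum_of_injective e e.injective
      · intro j hj
        simp only [Matrix.mulVec, dotProduct, hV0 j hj]
        simp [Real.zero_rpow hp0.ne']
      · intro s
        simp only [Matrix.mulVec, dotProduct, hV1, W]
        rw [← Finset.sum_sub_distrib]
        congr 2
        apply Finset.sum_congr rfl
        intro i _
        ring
    have hcore := core a (fun l => by dsimp only [a]; split_ifs <;> linarith)
      (fun l => by dsimp only [a]; split_ifs <;> linarith) W hp
    rw [← hL] at hcore
    set L := lpNorm p (fun i => V.mulVec x i - V.mulVec (fun _ => 1 / (n : ℝ)) i)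
    have hsum : ∑ s, W s * ∏ j, (1 + a j * sg (s j)) =
        t * N * ∑ i, (x i - 1 / n) * a (c i) := by
      simp only [W, Finset.sum_mul]
      rw [Finset.sum_comm, Finset.mul_sum]
      apply Finset.sum_congr rfl
      intro i _
      have := riesz_sum a (c i)
      calc _ = t * (x i - 1 / n) * ∑ s : Fin m → Bool, sg (s (c i)) * ∏ j, (1 + a j * sg (s j)) := by
            rw [Finset.mul_sum]
            apply Finset.sum_congr rfl
            intro s _
            ring
        _ = _ := by rw [this]; ring
    have htN : t * N = N ^ (1 - 1 / p) := by
      rw [ht, sub_eq_add_neg, add_comm, Real.rpow_add hN0, Real.rpow_one]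
    have ha2 : (∑ j, a j ^ 2) / p ≤ 1 / 4 := by
      have : ∑ j, a j ^ 2 = S'.card * (2 * ε) ^ 2 := by
        simp [a, ite_pow]
      rw [this, div_le_iff₀ hp0]
      rw [le_div_iff₀ (by positivity)] at hkK
      linarith
    have hxa : ∑ i, x i * a (c i) = 2 * ε := by
      rw [← mul_one (2 * ε), ← hx1, Finset.mul_sum]
      apply Finset.sum_congr rfl
      intro i _
      by_cases h : x i = 0
      · simp [h]
      · have : c i ∈ S' := Finset.mem_image_of_mem _ (by simp [hS, h])
        simp only [a, this, if_true]
        ring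
    have hua : ∑ i, 1 / (n : ℝ) * a (c i) ≤ ε / 2 := by
      have h1 : (Finset.univ.filter (fun i => c i ∈ S')).card ≤ S'.card * (n / m + 1) := by
        rw [mul_comm]
        apply Finset.card_le_mul_card_image_of_maps_to (f := c)
        · intro i hi
          simpa using hi
        · intro l _
          refine (Finset.card_le_card ?_).trans (fibre (n := n) hm0 l)
          intro i hi
          simp only [Finset.mem_filter, Finset.mem_univ, true_and] at hi ⊢
          exact hi.2
      have h2 : ∑ i, a (c i) = (Finset.univ.filter (fun i => c i ∈ S')).card * (2 * ε) := by
        simp [a, Finset.sum_ite]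
      have h3 : 4 * (S'.card * (n / m + 1)) ≤ n := by
        have e1 : m * (n / m) ≤ n := Nat.mul_div_le n m
        have e2 : S'.card * (n / m + 1) ≤ M * (n / m + 1) := Nat.mul_le_mul_right _ hkM
        rw [hm] at e1 hmn
        rw [← hm] at e1
        nlinarith
      have h4 : 4 * ((Finset.univ.filter (fun i => c i ∈ S')).card : ℝ) ≤ n := by
        exact_mod_cast (by omega : 4 * (Finset.univ.filter (fun i => c i ∈ S')).card ≤ n)
      rw [← Finset.mul_sum, h2, one_div, inv_mul_le_iff₀ hnR]
      nlinarith
    have hE : 3 / 2 * ε ≤ ∑ i, (x i - 1 / n) * a (c i) := by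
      simp only [sub_mul, Finset.sum_sub_distrib]
      rw [hxa]
      linarith
    rw [hsum, htN] at hcore
    have hNp : 0 < N ^ (1 - 1 / p) := by positivity
    have hL0 : 0 ≤ L := by rw [hL]; positivity
    have h5 : ∑ i, (x i - 1 / n) * a (c i) ≤ L * Real.exp ((∑ j, a j ^ 2) / p) := by
      refine le_of_mul_le_mul_left ?_ hNp
      linarith
    have h6 : Real.exp ((∑ j, a j ^ 2) / p) < 3 / 2 := by
      refine (Real.exp_le_exp.2 ha2).trans_lt ?_
      have h7 : Real.exp (1 / 4) ^ 4 = Real.exp 1 := by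
        rw [← Real.exp_nat_mul]; norm_num
      by_contra! h
      have h8 : (3 / 2 : ℝ) ^ 4 ≤ Real.exp (1 / 4) ^ 4 := by gcongr
      rw [h7] at h8
      have := Real.exp_one_lt_d9
      norm_num at h8
      linarith
    by_contra! hcon
    have h9 : L * Real.exp ((∑ j, a j ^ 2) / p) < ε * (3 / 2) :=
      mul_lt_mul' hcon h6 (Real.exp_pos _).le hε
    linarith
end

section
/- Let G be a graph on n vertices with distinguished vertices s and t, and for each s–t path P in G let 𝟙_P ∈ ℝ^E be the characteristic vector of its edge set (E the edge set of G). Let f* ∈ ℝ^E lie in the convex hull of {𝟙_P : P an s–t path in G} (i.e. f* is an s–t flow routing one unit of demand). Then for every real p ≥ 2 and ε > 0, there exist a positive integer k ≤ ⌈4(p−1)·n^{2/p}/ε²⌉ and s–t paths P₁, …, P_k (repetitions allowed) such that ‖(1/k)·Σ_{t=1}^{k} 𝟙_{P_t} − f*‖_p ≤ ε; equivalently, there is a probability distribution over s–t paths supported on at most ⌈4(p−1)·n^{2/p}/ε²⌉ paths whose expected indicator vector is within ε of f* in ℓ_p norm. -/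
open Finset
open scoped Classical

theorem h_deriv (p : ℝ) (hp : 2 ≤ p) (z : ℝ) :
    HasDerivAt (fun z : ℝ => |z| ^ (p - 2) * z) ((p - 1) * |z| ^ (p - 2)) z := by
  rcases eq_or_lt_of_le hp with rfl | hp2
  · norm_num
    exact hasDerivAt_id z
  rcases eq_or_ne z 0 with rfl | hz
  · have h0 : (p - 1) * |(0 : ℝ)| ^ (p - 2) = 0 := by
      rw [abs_zero, Real.zero_rpow (by linarith), mul_zero]
    rw [h0, hasDerivAt_iff_tendsto_slope]
    have hc : Continuous (fun z : ℝ => |z| ^ (p - 2)) :=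
      continuous_abs.rpow_const (fun _ => Or.inr (by linarith))
    have ht := (hc.tendsto 0).mono_left (nhdsWithin_le_nhds (s := {0}ᶜ))
    simp only [abs_zero] at ht
    rw [Real.zero_rpow (by linarith)] at ht
    refine ht.congr' ?_
    filter_upwards [self_mem_nhdsWithin] with w hw
    have hw' : w ≠ 0 := hw
    simp only [slope, vsub_eq_sub, smul_eq_mul]
    field_simp
    simp
  · have ha : 0 < |z| := abs_pos.mpr hz
    have h1 := ((hasDerivAt_abs hz).rpow_const (p := p - 2) (Or.inl ha.ne')).mul (hasDerivAt_id z)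
    refine h1.congr_deriv ?_
    have h2 : |z| ^ (p - 2) = |z| ^ (p - 2 - 1) * |z| := by
      rw [Real.rpow_sub_one ha.ne']
      field_simp
    have h3 : (SignType.sign z : ℝ) * z = |z| := by
      simp
    simp only [id]
    rw [h2]
    linear_combination (p - 2) * |z| ^ (p - 2 - 1) * h3

theorem abs_deriv (p : ℝ) (hp : 2 ≤ p) (z : ℝ) :
    HasDerivAt (fun z : ℝ => |z| ^ p) (p * (|z| ^ (p - 2) * z)) z := by
  have := hasDerivAt_abs_rpow z (p := p) (by linarith)
  simpa [mul_assoc] using this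

theorem holder_aux {ι : Type*} [Fintype ι] (p : ℝ) (hp : 2 ≤ p) (w y : ι → ℝ) :
    ∑ j, |w j| ^ (p - 2) * (y j) ^ 2 ≤
      (∑ j, |w j| ^ p) ^ (1 - 2 / p) * (∑ j, |y j| ^ p) ^ (2 / p) := by
  rcases eq_or_lt_of_le hp with rfl | hp2
  · norm_num
  have hp0 : 0 < p := by linarith
  have hpq : (p / (p - 2)).HolderConjugate (p / 2) := by
    rw [Real.holderConjugate_iff]
    constructor
    · rw [lt_div_iff₀ (by linarith)]; linarith
    · rw [inv_div, inv_div]; field_simp; ring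
  have := Real.inner_le_Lp_mul_Lq univ (fun j => |w j| ^ (p - 2)) (fun j => (y j) ^ 2) hpq
  refine this.trans (le_of_eq ?_)
  have e1 : ∀ j, |(|w j| ^ (p - 2))| ^ (p / (p - 2)) = |w j| ^ p := by
    intro j
    rw [abs_of_nonneg (by positivity), ← Real.rpow_mul (abs_nonneg _)]
    congr 1
    have : p - 2 ≠ 0 := by linarith
    field_simp
  have e2 : ∀ j, |(y j) ^ 2| ^ (p / 2) = |y j| ^ p := by
    intro j
    rw [abs_pow, ← Real.rpow_natCast, ← Real.rpow_mul (abs_nonneg _)]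
    congr 1
    push_cast
    field_simp
  simp only [e1, e2]
  congr 2
  · field_simp
  · field_simp

theorem taylor_aux (φ phid phidd : ℝ → ℝ) (C : ℝ) (h1 : ∀ t, HasDerivAt φ (phid t) t)
    (h2 : ∀ t, HasDerivAt phid (phidd t) t) (h3 : ∀ t, phidd t ≤ 2 * C) :
    φ 1 ≤ φ 0 + phid 0 + C := by
  have a2 : ∀ t, HasDerivAt (fun t => phid t - 2 * C * t) (phidd t - 2 * C) t := fun t =>
    ((h2 t).sub ((hasDerivAt_id t).const_mul (2 * C))).congr_deriv (by simp)
  have m2 : Antitone (fun t => phid t - 2 * C * t) :=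
    antitone_of_deriv_nonpos (fun t => (a2 t).differentiableAt)
      (fun t => by rw [(a2 t).deriv]; linarith [h3 t])
  have a1 : ∀ t, HasDerivAt (fun t => φ t - phid 0 * t - C * t ^ 2) (phid t - phid 0 - 2 * C * t) t :=
    fun t => (((h1 t).sub ((hasDerivAt_id t).const_mul (phid 0))).sub
      ((hasDerivAt_pow 2 t).const_mul C)).congr_deriv (by simp; ring)
  have m1 : AntitoneOn (fun t => φ t - phid 0 * t - C * t ^ 2) (Set.Ici 0) := by
    apply antitoneOn_of_deriv_nonpos (convex_Ici 0)
    · exact fun t _ => (a1 t).continuousAt.continuousWithinAt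
    · exact fun t _ => (a1 t).differentiableAt.differentiableWithinAt
    · intro t ht
      rw [interior_Ici] at ht
      rw [(a1 t).deriv]
      have := m2 (le_of_lt ht)
      simp only at this
      linarith
  have := m1 (Set.mem_Ici.mpr le_rfl) (Set.mem_Ici.mpr zero_le_one) zero_le_one
  simp only at this
  linarith

theorem smooth_aux {ι : Type*} [Fintype ι] (p : ℝ) (hp : 2 ≤ p) (δ : ℝ) (hδ : 0 < δ)
    (x : ι → ℝ) : ∃ c : ι → ℝ, ∀ y : ι → ℝ,
      (δ + ∑ j, |x j + y j| ^ p) ^ (2 / p) ≤ (δ + ∑ j, |x j| ^ p) ^ (2 / p)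
        + ∑ j, c j * y j + (p - 1) * (∑ j, |y j| ^ p) ^ (2 / p) := by
  have hp0 : 0 < p := by linarith
  refine ⟨fun j => 2 * (|x j| ^ (p - 2) * x j) * (δ + ∑ j, |x j| ^ p) ^ (2 / p - 1), fun y => ?_⟩
  set g : ℝ → ℝ := fun t => δ + ∑ j, |x j + t * y j| ^ p with hg
  set gd : ℝ → ℝ := fun t => ∑ j, p * (|x j + t * y j| ^ (p - 2) * (x j + t * y j)) * y j with hgd
  set gdd : ℝ → ℝ := fun t => ∑ j, p * ((p - 1) * |x j + t * y j| ^ (p - 2) * y j) * y j with hgdd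
  have hlin : ∀ j t, HasDerivAt (fun t : ℝ => x j + t * y j) (y j) t := fun j t =>
    (((hasDerivAt_id t).mul_const (y j)).const_add (x j)).congr_deriv (by simp)
  have dg : ∀ t, HasDerivAt g (gd t) t := by
    intro t
    refine (HasDerivAt.fun_sum fun j _ => ?_).const_add δ
    exact (abs_deriv p hp (x j + t * y j)).comp t (hlin j t)
  have dgd : ∀ t, HasDerivAt gd (gdd t) t := by
    intro t
    refine HasDerivAt.fun_sum fun j _ => ?_
    exact (((h_deriv p hp (x j + t * y j)).comp t (hlin j t)).const_mul p).mul_const (y j)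
  have gpos : ∀ t, 0 < g t := fun t => by simp only [hg]; positivity
  have key := taylor_aux (fun t => g t ^ (2 / p)) (fun t => gd t * (2 / p) * g t ^ (2 / p - 1))
    (fun t => gdd t * (2 / p) * g t ^ (2 / p - 1) +
      gd t * (2 / p) * (gd t * (2 / p - 1) * g t ^ (2 / p - 1 - 1)))
    ((p - 1) * (∑ j, |y j| ^ p) ^ (2 / p))
    (fun t => (dg t).rpow_const (Or.inl (gpos t).ne'))
    (fun t => ((dgd t).mul_const (2 / p)).mul ((dg t).rpow_const (Or.inl (gpos t).ne'))) ?_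
  · have e0 : g 0 = δ + ∑ j, |x j| ^ p := by simp [hg]
    have e1 : g 1 = δ + ∑ j, |x j + y j| ^ p := by simp [hg]
    have e2 : gd 0 * (2 / p) * g 0 ^ (2 / p - 1) =
        ∑ j, 2 * (|x j| ^ (p - 2) * x j) * (δ + ∑ j, |x j| ^ p) ^ (2 / p - 1) * y j := by
      rw [e0]
      simp only [hgd, Finset.sum_mul]
      refine Finset.sum_congr rfl fun j _ => ?_
      simp only [zero_mul, add_zero]
      field_simp
    simp only [e2] at key
    rw [e0, e1] at key
    exact key
  · intro t
    have n1 : gd t * (2 / p) * (gd t * (2 / p - 1) * g t ^ (2 / p - 1 - 1)) ≤ 0 := by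
      have a : 2 / p - 1 ≤ 0 := by
        rw [sub_nonpos, div_le_one hp0]; exact hp
      have b : 0 ≤ (gd t) ^ 2 * (2 / p) * g t ^ (2 / p - 1 - 1) := by
        have := (gpos t).le
        positivity
      nlinarith
    have H := holder_aux p hp (fun j => x j + t * y j) y
    have e3 : gdd t = p * (p - 1) * ∑ j, |x j + t * y j| ^ (p - 2) * (y j) ^ 2 := by
      simp only [hgdd, Finset.mul_sum]
      exact Finset.sum_congr rfl fun j _ => by ring
    have H2 : (∑ j, |x j + t * y j| ^ p) ^ (1 - 2 / p) ≤ g t ^ (1 - 2 / p) := by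
      apply Real.rpow_le_rpow (by positivity)
      · simp only [hg]; linarith
      · rw [sub_nonneg, div_le_one hp0]; exact hp
    have Y0 : 0 ≤ (∑ j, |y j| ^ p) ^ (2 / p) := by positivity
    have H3 : (∑ j, |x j + t * y j| ^ (p - 2) * (y j) ^ 2) * g t ^ (2 / p - 1) ≤
        (∑ j, |y j| ^ p) ^ (2 / p) := by
      have e4 : g t ^ (1 - 2 / p) * g t ^ (2 / p - 1) = 1 := by
        rw [← Real.rpow_add (gpos t)]; simp
      calc _ ≤ (g t ^ (1 - 2 / p) * (∑ j, |y j| ^ p) ^ (2 / p)) * g t ^ (2 / p - 1) := by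
            apply mul_le_mul_of_nonneg_right _ (Real.rpow_nonneg (gpos t).le _)
            exact H.trans (mul_le_mul_of_nonneg_right H2 Y0)
        _ = _ := by linear_combination (∑ j, |y j| ^ p) ^ (2 / p) * e4
    have e5 : gdd t * (2 / p) * g t ^ (2 / p - 1) = 2 * (p - 1) *
        ((∑ j, |x j + t * y j| ^ (p - 2) * (y j) ^ 2) * g t ^ (2 / p - 1)) := by
      rw [e3]; field_simp
    have := mul_le_mul_of_nonneg_left H3 (show 0 ≤ 2 * (p - 1) by linarith)
    linarith

theorem greedy_aux {ι : Type*} [Fintype ι] (p : ℝ) (hp : 2 ≤ p) (δ : ℝ) (hδ : 0 < δ)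
    (S : Set (ι → ℝ)) (f : ι → ℝ) (hf : f ∈ convexHull ℝ S) (D : ℝ)
    (hD : ∀ v ∈ S, ∑ j, |v j - f j| ^ p ≤ D) (k : ℕ) :
    ∃ w : Fin k → ι → ℝ, (∀ i, w i ∈ S) ∧
      (δ + ∑ j, |∑ i, (w i j - f j)| ^ p) ^ (2 / p) ≤
        δ ^ (2 / p) + k * ((p - 1) * D ^ (2 / p)) := by
  have hp0 : 0 < p := by linarith
  induction k with
  | zero =>
    refine ⟨fun i => i.elim0, fun i => i.elim0, ?_⟩
    simp [Real.zero_rpow hp0.ne']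
  | succ k ih =>
    obtain ⟨w, hw, hb⟩ := ih
    obtain ⟨c, hc⟩ := smooth_aux p hp δ hδ (fun j => ∑ i, (w i j - f j))
    have hex : ∃ v ∈ S, ∑ j, c j * (v j - f j) ≤ 0 := by
      by_contra hcon
      push Not at hcon
      have hconv : Convex ℝ {v : ι → ℝ | ∑ j, c j * f j < ∑ j, c j * v j} := by
        apply convex_halfSpace_gt
        constructor
        · intro a b; simp [mul_add, Finset.sum_add_distrib]
        · intro r a
          simp only [Pi.smul_apply, smul_eq_mul, Finset.mul_sum]
          exact Finset.sum_congr rfl fun j _ => by ring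
      have hsub := convexHull_min (s := S) (fun v hv => by
        have := hcon v hv
        simp only [mul_sub, Finset.sum_sub_distrib] at this
        change ∑ j, c j * f j < ∑ j, c j * v j
        linarith) hconv
      have hlt : ∑ j, c j * f j < ∑ j, c j * f j := hsub hf
      exact lt_irrefl _ hlt
    obtain ⟨v, hv, hle⟩ := hex
    refine ⟨Fin.cons v w, ?_, ?_⟩
    · intro i
      refine Fin.cases ?_ (fun i => ?_) i
      · simpa using hv
      · simpa using hw i
    · have h1 := hc (fun j => v j - f j)
      simp only [Fin.sum_univ_succ, Fin.cons_zero, Fin.cons_succ]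
      have h2 : (∑ j, |v j - f j| ^ p) ^ (2 / p) ≤ D ^ (2 / p) :=
        Real.rpow_le_rpow (by positivity) (hD v hv) (by positivity)
      have h3 := mul_le_mul_of_nonneg_left h2 (show 0 ≤ p - 1 by linarith)
      have e : ∀ j, v j - f j + ∑ i, (w i j - f j) = ∑ i, (w i j - f j) + (v j - f j) :=
        fun j => add_comm _ _
      simp only [e]
      push_cast
      linarith

/-- **Path stripping via approximate Carathéodory** (Proposition 5.2 of the paper):
any unit `s`-`t` flow `f*` (a point of the convex hull of indicator vectors of `s`-`t`
paths in a graph on `n` vertices) is within `ε` in ℓ_p norm of the average of at most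
`⌈4(p-1)·n^{2/p}/ε²⌉` path indicator vectors. -/
theorem flow_path_rounding
    (V : Type) [Fintype V] [DecidableEq V]
    (G : SimpleGraph V) (s t : V) (n : ℕ) (hn : n = Fintype.card V)
    (f : Sym2 V → ℝ)
    (hf : f ∈ convexHull ℝ {v : Sym2 V → ℝ |
      ∃ P : G.Walk s t, P.IsPath ∧ v = fun e => if e ∈ P.edges then (1 : ℝ) else 0})
    (p : ℝ) (hp : 2 ≤ p) (ε : ℝ) (hε : 0 < ε) :
    ∃ k : ℕ, 0 < k ∧ k ≤ ⌈4 * (p - 1) * (n : ℝ) ^ ((2 : ℝ) / p) / ε ^ 2⌉₊ ∧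
      ∃ P : Fin k → G.Walk s t, (∀ i, (P i).IsPath) ∧
        lpNorm p (fun e : Sym2 V =>
          (1 / (k : ℝ)) * (∑ i, if e ∈ (P i).edges then (1 : ℝ) else 0) - f e) ≤ ε := by
  have hp0 : 0 < p := by linarith
  have hn1 : 1 ≤ n := by
    rw [hn]; exact Fintype.card_pos_iff.mpr ⟨s⟩
  have hnpos : (0 : ℝ) < n := by exact_mod_cast hn1
  have hNpos : 0 < (n : ℝ) ^ ((2 : ℝ) / p) := Real.rpow_pos_of_pos hnpos _
  set S : Set (Sym2 V → ℝ) := {v : Sym2 V → ℝ |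
      ∃ P : G.Walk s t, P.IsPath ∧ v = fun e => if e ∈ P.edges then (1 : ℝ) else 0} with hS
  have hS1 : ∀ v ∈ S, (∀ e, 0 ≤ v e ∧ v e ≤ 1) ∧ ∑ e, v e ≤ n := by
    rintro v ⟨P, hP, rfl⟩
    refine ⟨fun e => by dsimp only; split_ifs <;> norm_num, ?_⟩
    have h1 : (∑ e : Sym2 V, if e ∈ P.edges then (1 : ℝ) else 0) = (P.edges.toFinset.card : ℝ) := by
      rw [Finset.sum_ite]
      simp only [Finset.sum_const_zero, add_zero, Finset.sum_const, nsmul_eq_mul, mul_one]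
      congr 2
      ext e
      simp
    rw [h1]
    have h2 := List.toFinset_card_le P.edges
    rw [SimpleGraph.Walk.length_edges] at h2
    have h3 := hP.length_lt
    rw [hn]
    exact_mod_cast h2.trans h3.le
  have hF : (∀ e, 0 ≤ f e ∧ f e ≤ 1) ∧ ∑ e, f e ≤ n := by
    have hconv : Convex ℝ {v : Sym2 V → ℝ | (∀ e, 0 ≤ v e ∧ v e ≤ 1) ∧ ∑ e, v e ≤ n} := by
      rintro a ⟨ha1, ha2⟩ b ⟨hb1, hb2⟩ r q hr hq hrq
      have hr' : r = 1 - q := by linarith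
      refine ⟨fun e => ?_, ?_⟩
      · simp only [Pi.add_apply, Pi.smul_apply, smul_eq_mul]
        have h1 := ha1 e
        have h2 := hb1 e
        constructor
        · have := mul_nonneg hr h1.1
          have := mul_nonneg hq h2.1
          linarith
        · have := mul_le_mul_of_nonneg_left h1.2 hr
          have := mul_le_mul_of_nonneg_left h2.2 hq
          linarith
      · simp only [Pi.add_apply, Pi.smul_apply, smul_eq_mul, Finset.sum_add_distrib,
          ← Finset.mul_sum]
        have h1 := mul_le_mul_of_nonneg_left ha2 hr
        have h2 := mul_le_mul_of_nonneg_left hb2 hq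
        have h3 : r * (n : ℝ) + q * n = n := by rw [← add_mul, hrq, one_mul]
        linarith
    exact convexHull_min (fun v hv => hS1 v hv) hconv hf
  have hD : ∀ v ∈ S, ∑ e, |v e - f e| ^ p ≤ 2 * (n : ℝ) := by
    intro v hv
    obtain ⟨h1, h2⟩ := hS1 v hv
    have h3 : ∀ e, |v e - f e| ^ p ≤ v e + f e := by
      intro e
      have hv1 := h1 e
      have hf1 := hF.1 e
      have a1 : |v e - f e| ≤ 1 := by rw [abs_le]; constructor <;> linarith
      have a2 : |v e - f e| ≤ v e + f e := by rw [abs_le]; constructor <;> linarith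
      refine le_trans ?_ a2
      have := Real.rpow_le_rpow_of_exponent_ge' (abs_nonneg (v e - f e)) a1 zero_le_one
        (show (1 : ℝ) ≤ p by linarith)
      rwa [Real.rpow_one] at this
    calc _ ≤ ∑ e, (v e + f e) := Finset.sum_le_sum fun e _ => h3 e
      _ = ∑ e, v e + ∑ e, f e := Finset.sum_add_distrib
      _ ≤ 2 * (n : ℝ) := by linarith [hF.2]
  set A : ℝ := 4 * (p - 1) * (n : ℝ) ^ ((2 : ℝ) / p) / ε ^ 2 with hA
  have hApos : 0 < A := by
    have : 0 < p - 1 := by linarith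
    positivity
  set k := ⌈A⌉₊ with hk
  have hk0 : 0 < k := Nat.ceil_pos.mpr hApos
  have hkR : (0 : ℝ) < k := by exact_mod_cast hk0
  have hAk : A ≤ k := Nat.le_ceil A
  have hAk' : 4 * (p - 1) * (n : ℝ) ^ ((2 : ℝ) / p) ≤ k * ε ^ 2 := by
    rwa [hA, div_le_iff₀ (by positivity)] at hAk
  set δ : ℝ := ((k * ε) ^ 2 / 2) ^ (p / 2) with hδ
  have hδ0 : 0 < δ := by positivity
  have hδ2 : δ ^ (2 / p) = (k * ε) ^ 2 / 2 := by
    rw [hδ, ← Real.rpow_mul (by positivity), show p / 2 * (2 / p) = 1 by field_simp, Real.rpow_one]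
  obtain ⟨w, hw, hb⟩ := greedy_aux p hp δ hδ0 S f hf (2 * n) hD k
  choose P hP hPw using hw
  refine ⟨k, hk0, le_rfl, P, hP, ?_⟩
  have h2p : (2 * (n : ℝ)) ^ (2 / p) ≤ 2 * (n : ℝ) ^ (2 / p) := by
    rw [Real.mul_rpow (by norm_num) hnpos.le]
    apply mul_le_mul_of_nonneg_right _ hNpos.le
    have : (2 : ℝ) ^ (2 / p) ≤ 2 ^ (1 : ℝ) :=
      Real.rpow_le_rpow_of_exponent_le (by norm_num) (by rw [div_le_one hp0]; exact hp)
    rwa [Real.rpow_one] at this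
  have hfin : (δ + ∑ j, |∑ i, (w i j - f j)| ^ p) ^ (2 / p) ≤ (k * ε) ^ 2 := by
    refine hb.trans ?_
    rw [hδ2]
    have h1 : (p - 1) * (2 * (n : ℝ)) ^ (2 / p) ≤ k * ε ^ 2 / 2 := by
      have := mul_le_mul_of_nonneg_left h2p (show 0 ≤ p - 1 by linarith)
      linarith
    have h2 := mul_le_mul_of_nonneg_left h1 hkR.le
    nlinarith
  have hsum : ∑ j, |∑ i, (w i j - f j)| ^ p ≤ (k * ε) ^ p := by
    have h0 : 0 ≤ ∑ j, |∑ i, (w i j - f j)| ^ p := by positivity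
    have h1 := Real.rpow_le_rpow (by positivity) hfin (show 0 ≤ p / 2 by positivity)
    rw [← Real.rpow_mul (by positivity), show 2 / p * (p / 2) = 1 by field_simp, Real.rpow_one,
      ← Real.rpow_natCast, ← Real.rpow_mul (by positivity)] at h1
    have e : ((2 : ℕ) : ℝ) * (p / 2) = p := by push_cast; ring
    rw [e] at h1
    linarith
  have hterm : ∀ e : Sym2 V, (1 / (k : ℝ)) * (∑ i, if e ∈ (P i).edges then (1 : ℝ) else 0) - f e
      = (∑ i, (w i e - f e)) / k := by
    intro e
    rw [Finset.sum_sub_distrib]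
    simp only [hPw, Finset.sum_const, Finset.card_univ, Fintype.card_fin, nsmul_eq_mul]
    field_simp
  unfold lpNorm
  simp only [hterm]
  have hlast : ∑ e : Sym2 V, |(∑ i, (w i e - f e)) / (k : ℝ)| ^ p ≤ ε ^ p := by
    have : ∀ e : Sym2 V, |(∑ i, (w i e - f e)) / (k : ℝ)| ^ p =
        |∑ i, (w i e - f e)| ^ p / (k : ℝ) ^ p := by
      intro e
      rw [abs_div, abs_of_pos hkR, Real.div_rpow (abs_nonneg _) hkR.le]
    simp only [this]
    rw [← Finset.sum_div, div_le_iff₀ (by positivity), ← Real.mul_rpow hε.le hkR.le, mul_comm ε]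
    exact hsum
  have := Real.rpow_le_rpow (by positivity) hlast (show 0 ≤ 1 / p by positivity)
  rwa [← Real.rpow_mul hε.le, mul_one_div_cancel hp0.ne', Real.rpow_one] at this
end
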